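/- arXiv:0708.2280 — 2 statements merged into one kernel-verified Lean document; each statement's English description precedes it below -/
import Mathlib

section
/- Every finite 3-group G that is an E-group and has order at most 3^10 is nilpotent of class at most 2 (i.e., its derived subgroup is contained in its center). -/
/-- A group is an `E`-group if every element commutes with all of its
endomorphic images. -/
def IsEGroup (G : Type*) [Group G] : Prop :=
  ∀ (φ : G →* G) (x : G), x * φ x = φ x * x

/-!
Inner automorphisms show that an `E`-group is 2-Engel, so (Levi) its triple commutators are
alternating of exponent dividing 3, and its class is at most 3. Write `D` for the derived subgroup,
`Z` for the center, and suppose `w = ⁅x, ⁅y, z⁆⁆ ≠ 1`. The commutator pairing of `x, y, z` with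
`⁅y, z⁆, ⁅z, x⁆, ⁅x, y⁆` is then diagonal with entries `w`, whence `3 ^ 3` divides both `|G : D|`
and `|D : D ∩ Z|`, and the latter is a power `3 ^ k`.

On the other hand, let `n` be the exponent of `G ⧸ D`, and compose a surjection of `G` onto the
cyclic group of order `n` with a map of that cyclic group into `G`: commutation with such
endomorphisms makes every `u` with `u ^ n = 1` central. So the `n`-th power map on `D` has kernel
inside `Z`, while bilinearity puts its image inside `⁅G, D⁆ ≤ D ∩ Z`. Hence `3 ^ k` divides
`|⁅G, D⁆|`, and the order of `G` is divisible by `3 ^ k * 3 ^ k * 3 ^ 3`. If `3 ^ 11` does not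
divide it, then `k = 3`, and so `⁅G, D⁆` is generated by `w` and has order 3, a contradiction.
-/

open scoped commutatorElement

theorem orderOf_pow_card_dvd_index {ι A B : Type*} [Fintype ι] [DecidableEq ι] [Group A]
    [Group B] {w : B} (f : ι → A →* B) (a : ι → A) (hfa : ∀ i j, f i (a j) = if i = j then w else 1)
    {H : Subgroup A} (hH : ∀ i, H ≤ (f i).ker) : orderOf w ^ Fintype.card ι ∣ H.index := by
  let Φ : A →* ι → B := MonoidHom.pi f
  let Ψ : (ι → Subgroup.zpowers w) →* ι → B := (Subgroup.zpowers w).subtype.compLeft ι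
  have hΨ : Function.Injective Ψ := (Subgroup.subtype_injective _).comp_left
  have hrange : Ψ.range ≤ Φ.range := by
    rintro _ ⟨r, rfl⟩
    refine Subgroup.pi_mem_of_mulSingle_mem _ fun j => ?_
    obtain ⟨k, hk⟩ := Subgroup.mem_zpowers_iff.1 (r j).2
    refine ⟨a j ^ k, funext fun i => ?_⟩
    rcases eq_or_ne i j with rfl | hij
    · simp [Φ, Ψ, hfa, hk]
    · simp [Φ, hfa, hij]
  have hker : H ≤ Φ.ker := fun u hu => funext fun i => hH i hu
  calc orderOf w ^ Fintype.card ι = Nat.card Ψ.range := by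
        rw [← Nat.card_congr (MonoidHom.ofInjective hΨ).toEquiv, Nat.card_fun, Nat.card_zpowers,
          Nat.card_eq_fintype_card]
    _ ∣ Nat.card Φ.range := Subgroup.card_dvd_of_le hrange
    _ = Φ.ker.index := (Subgroup.index_ker Φ).symm
    _ ∣ H.index := Subgroup.index_dvd_of_le hker

theorem exists_card_range_eq_exponent (A : Type*) [CommGroup A] [Finite A] :
    ∃ χ : A →* ℂˣ, Nat.card χ.range = Monoid.exponent A := by
  have : NeZero (Monoid.exponent A) := ⟨Monoid.exponent_ne_zero_of_finite⟩
  obtain ⟨e⟩ := CommGroup.monoidHom_mulEquiv_of_hasEnoughRootsOfUnity A ℂ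
  have : Finite (A →* ℂˣ) := Finite.of_equiv _ e.symm.toEquiv
  obtain ⟨χ, hχ⟩ :=
    Monoid.exists_orderOf_eq_exponent (Monoid.ExponentExists.of_finite (G := A →* ℂˣ))
  have : Finite χ.range := Set.finite_range χ
  refine ⟨χ, Nat.dvd_antisymm ?_ ?_⟩
  · rw [← IsCyclic.exponent_eq_card]
    exact MonoidHom.exponent_dvd χ.rangeRestrict_surjective
  · rw [← Monoid.exponent_eq_of_mulEquiv e, ← hχ]
    exact orderOf_dvd_of_pow_eq_one (MonoidHom.ext fun a =>
      congrArg Subtype.val (pow_card_eq_one' (x := χ.rangeRestrict a)))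

/-- A group is 2-Engel if it satisfies the commutator law `[x, [x, y]] = 1`; equivalently, every
element commutes with its conjugates. -/
def IsTwoEngel (G : Type*) [Group G] : Prop :=
  ∀ x y : G, ⁅x, ⁅x, y⁆⁆ = 1

section

variable {G : Type*} [Group G]

namespace IsTwoEngel

theorem commute_commutatorElement (h : IsTwoEngel G) (x y : G) : Commute x ⁅x, y⁆ :=
  commutatorElement_eq_one_iff_commute.1 (h x y)

theorem commute_commutatorElement' (h : IsTwoEngel G) (x y : G) : Commute y ⁅x, y⁆ := by
  simpa only [commutatorElement_inv] using (h.commute_commutatorElement y x).inv_right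

theorem commutatorElement_inv_left (h : IsTwoEngel G) (x y : G) : ⁅x⁻¹, y⁆ = ⁅x, y⁆⁻¹ := by
  rw [_root_.commutatorElement_inv_left, mul_assoc, ← (h.commute_commutatorElement' y x).eq,
    inv_mul_cancel_left, commutatorElement_inv]

theorem commutatorElement_inv_right (h : IsTwoEngel G) (x y : G) : ⁅x, y⁻¹⁆ = ⁅x, y⁆⁻¹ := by
  rw [← commutatorElement_inv, h.commutatorElement_inv_left, commutatorElement_inv]

theorem commutatorElement_pow_left (h : IsTwoEngel G) (x y : G) (n : ℕ) :
    ⁅x ^ n, y⁆ = ⁅x, y⁆ ^ n := by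
  induction n with
  | zero => simp
  | succ n ih =>
    rw [pow_succ, commutatorElement_mul_left_eq_conj_mul,
      ((h.commute_commutatorElement x y).pow_left n).mul_inv_cancel, ih, pow_succ']

theorem commute_conj_conj (h : IsTwoEngel G) (x a b : G) :
    Commute (a * x * a⁻¹) (b * x * b⁻¹) := by
  have hconj : Commute x (a⁻¹ * b * x * (a⁻¹ * b)⁻¹) := by
    have hmul : a⁻¹ * b * x * (a⁻¹ * b)⁻¹ = ⁅a⁻¹ * b, x⁆ * x := by simp [commutatorElement_def]
    rw [hmul]
    exact (h.commute_commutatorElement' _ _).mul_right (Commute.refl x)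
  have := (Commute.conj_iff a).2 hconj
  convert this using 1
  group

theorem commute_commutatorElement_conj (h : IsTwoEngel G) (x a b : G) :
    Commute ⁅a, x⁆ (b * x * b⁻¹) := by
  have := (h.commute_conj_conj x a b).mul_left (h.commute_conj_conj x 1 b).inv_left
  simpa [commutatorElement_def] using this

theorem tripleCommutator_swap_left (h : IsTwoEngel G) (x y z : G) :
    ⁅y, ⁅z, x⁆⁆ = ⁅z, ⁅y, x⁆⁆⁻¹ := by
  set p := ⁅z, x⁆
  set q := ⁅y, x⁆ with hq
  have hzp : Commute z p := h.commute_commutatorElement z x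
  have hyq : Commute y q := h.commute_commutatorElement y x
  have hpq : Commute p ⁅z, q⁆ := by
    have hconj : ⁅z, q⁆ = z * y * x * (z * y)⁻¹ * (z * x * z⁻¹)⁻¹ *
        ((y * x * y⁻¹) * (1 * x * 1⁻¹)⁻¹)⁻¹ := by
      simp only [hq, commutatorElement_def]; group
    have hp_conj := h.commute_commutatorElement_conj x z
    rw [hconj]
    exact ((hp_conj _).mul_right (hp_conj _).inv_right).mul_right
      ((hp_conj _).mul_right (hp_conj _).inv_right).inv_right
  -- `⁅y * z, x⁆ = y * p * y⁻¹ * q` is fixed under conjugation by `y * z`.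
  have hfix : z * (y * p * y⁻¹ * q) * z⁻¹ = p * q := by
    have hyz : ⁅y * z, x⁆ = y * p * y⁻¹ * q := commutatorElement_mul_left_eq_conj_mul y z x
    have hcomm := (h.commute_commutatorElement (y * z) x).eq
    rw [hyz] at hcomm
    calc z * (y * p * y⁻¹ * q) * z⁻¹
        = y⁻¹ * (y * z * (y * p * y⁻¹ * q)) * z⁻¹ := by group
      _ = p * (y⁻¹ * (q * y)) := by rw [hcomm]; group
      _ = p * q := by rw [← hyq.eq, inv_mul_cancel_left]
  have hconj : z * ⁅y, p⁆ * z⁻¹ = ⁅z, q⁆⁻¹ := by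
    calc z * ⁅y, p⁆ * z⁻¹
        = z * (y * p * y⁻¹ * q) * z⁻¹ * (z * q⁻¹ * (p⁻¹ * z⁻¹)) := by
          simp only [commutatorElement_def]; group
      _ = p * ⁅z, q⁆⁻¹ * p⁻¹ := by
          rw [hfix, ← mul_inv_rev, hzp.eq]; simp only [commutatorElement_def]; group
      _ = ⁅z, q⁆⁻¹ := hpq.inv_right.mul_inv_cancel
  calc ⁅y, p⁆ = z⁻¹ * (z * ⁅y, p⁆ * z⁻¹) * z := by group
    _ = z⁻¹ * ⁅z, q⁆⁻¹ * z := by rw [hconj]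
    _ = ⁅z, q⁆⁻¹ := (h.commute_commutatorElement z q).inv_right.inv_mul_cancel

theorem tripleCommutator_swap_right (h : IsTwoEngel G) (x y z : G) :
    ⁅x, ⁅y, z⁆⁆ = ⁅x, ⁅z, y⁆⁆⁻¹ := by
  rw [← h.commutatorElement_inv_right, commutatorElement_inv]

theorem tripleCommutator_rotate (h : IsTwoEngel G) (x y z : G) :
    ⁅x, ⁅y, z⁆⁆ = ⁅y, ⁅z, x⁆⁆ := by
  rw [h.tripleCommutator_swap_left z x y, ← h.tripleCommutator_swap_right y z x]

theorem tripleCommutator_pow_three (h : IsTwoEngel G) (x y z : G) : ⁅x, ⁅y, z⁆⁆ ^ 3 = 1 := by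
  have conj_eq (a b c : G) : b * ⁅a, ⁅b⁻¹, c⁆⁆ * b⁻¹ = ⁅a, ⁅b, c⁆⁆⁻¹ := by
    rw [h.commutatorElement_inv_left, h.commutatorElement_inv_right, h.tripleCommutator_rotate]
    exact (h.commute_commutatorElement b _).inv_right.mul_inv_cancel
  have hallWitt : ⁅x, ⁅y, z⁆⁆⁻¹ * ⁅y, ⁅z, x⁆⁆⁻¹ * ⁅z, ⁅x, y⁆⁆⁻¹ = 1 := by
    rw [← conj_eq x y z, ← conj_eq y z x, ← conj_eq z x y,
      ← conj_commutatorElement_right_commutatorElement_mul x y z]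
    group
  rw [← h.tripleCommutator_rotate y z x, ← h.tripleCommutator_rotate x y z] at hallWitt
  rw [← inv_eq_one, ← inv_pow, ← hallWitt, pow_succ, pow_two]

/-- The fourfold commutator is alternating, and exchanging the two pairs of arguments of
`⁅a, ⁅b, ⁅c, d⁆⁆⁆ = ⁅⁅c, d⁆, ⁅a, b⁆⁆`, an even permutation, inverts it; so its order divides both
2 and 3. -/
theorem quadrupleCommutator_eq_one (h : IsTwoEngel G) (a b c d : G) :
    ⁅a, ⁅b, ⁅c, d⁆⁆⁆ = 1 := by
  have swap_left (a b c d : G) : ⁅a, ⁅b, ⁅c, d⁆⁆⁆ = ⁅b, ⁅a, ⁅c, d⁆⁆⁆⁻¹ :=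
    h.tripleCommutator_swap_left _ _ _
  have swap_middle (a b c d : G) : ⁅a, ⁅b, ⁅c, d⁆⁆⁆ = ⁅a, ⁅c, ⁅b, d⁆⁆⁆⁻¹ := by
    rw [h.tripleCommutator_swap_left d b c, h.commutatorElement_inv_right]
  have swap_right (a b c d : G) : ⁅a, ⁅b, ⁅c, d⁆⁆⁆ = ⁅a, ⁅b, ⁅d, c⁆⁆⁆⁻¹ := by
    rw [h.tripleCommutator_swap_right b c d, h.commutatorElement_inv_right]
  have pairing (a b c d : G) : ⁅a, ⁅b, ⁅c, d⁆⁆⁆ = ⁅⁅c, d⁆, ⁅a, b⁆⁆ :=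
    (h.tripleCommutator_rotate ⁅c, d⁆ a b).symm
  have swap_pairs_inv : ⁅a, ⁅b, ⁅c, d⁆⁆⁆ = ⁅c, ⁅d, ⁅a, b⁆⁆⁆⁻¹ := by
    rw [pairing a, pairing c, commutatorElement_inv]
  have swap_pairs : ⁅a, ⁅b, ⁅c, d⁆⁆⁆ = ⁅c, ⁅d, ⁅a, b⁆⁆⁆ := by
    rw [swap_middle a b c d, swap_left a c b d, swap_right c a b d, swap_middle c a d b]
    simp only [inv_inv]
  have sq_eq_one : ⁅a, ⁅b, ⁅c, d⁆⁆⁆ ^ 2 = 1 := by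
    rw [pow_two, ← eq_inv_iff_mul_eq_one]
    exact swap_pairs_inv.trans (congrArg _ swap_pairs.symm)
  simpa using pow_gcd_eq_one.2 ⟨sq_eq_one, h.tripleCommutator_pow_three a b ⁅c, d⁆⟩

theorem commutatorElement_mem_center (h : IsTwoEngel G) (a : G) {u : G} (hu : u ∈ commutator G) :
    ⁅a, u⁆ ∈ Subgroup.center G := by
  have hle : commutator G ≤ Subgroup.upperCentralSeries G 2 := by
    refine Subgroup.commutator_le.2 fun c _ d _ =>
      Subgroup.mem_upperCentralSeries_succ_iff.2 fun b => ?_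
    rw [Subgroup.upperCentralSeries_one, ← commutatorElement_inv, inv_mem_iff,
      Subgroup.mem_center_iff]
    exact fun a => commutatorElement_eq_one_iff_mul_comm.1 (h.quadrupleCommutator_eq_one a b c d)
  have := Subgroup.mem_upperCentralSeries_succ_iff.1 (hle hu) a
  rwa [Subgroup.upperCentralSeries_one, ← commutatorElement_inv, inv_mem_iff] at this

theorem commute_of_mem_commutator (h : IsTwoEngel G) {u v : G} (hu : u ∈ commutator G)
    (hv : v ∈ commutator G) : Commute u v := by
  have hle : commutator G ≤ Subgroup.centralizer {v} := by
    refine Subgroup.commutator_le.2 fun a _ b _ => Subgroup.mem_centralizer_singleton_iff.2 ?_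
    refine (commutatorElement_eq_one_iff_commute.1 ?_ : Commute v ⁅a, b⁆).symm.eq
    rw [h.tripleCommutator_rotate, commutatorElement_eq_one_iff_mul_comm]
    exact Subgroup.mem_center_iff.1 (h.commutatorElement_mem_center b hv) a
  exact Subgroup.mem_centralizer_singleton_iff.1 (hle hu)

/-- The homomorphism `u ↦ ⁅a, u⁆` on the derived subgroup of a 2-Engel group. -/
def commutatorHomRight (h : IsTwoEngel G) (a : G) : commutator G →* G where
  toFun u := ⁅a, (u : G)⁆
  map_one' := commutatorElement_one_right a
  map_mul' u v := by
    rw [Subgroup.coe_mul, commutatorElement_mul_right_eq_mul_conj, mul_assoc, mul_assoc,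
      ← mul_assoc (u : G), Subgroup.mem_center_iff.1 (h.commutatorElement_mem_center a v.2) u,
      mul_inv_cancel_right]

/-- The homomorphism `a ↦ ⁅a, u⁆` on a 2-Engel group, for `u` in the derived subgroup. -/
def commutatorHomLeft (h : IsTwoEngel G) (u : commutator G) : G →* G where
  toFun a := ⁅a, (u : G)⁆
  map_one' := commutatorElement_one_left _
  map_mul' a b := by
    have hb := Subgroup.mem_center_iff.1 (h.commutatorElement_mem_center b u.2)
    rw [commutatorElement_mul_left_eq_conj_mul, hb a, mul_inv_cancel_right, hb]

theorem center_subgroupOf_le_ker (h : IsTwoEngel G) (a : G) :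
    (Subgroup.center G).subgroupOf (commutator G) ≤ (h.commutatorHomRight a).ker := fun _ hu =>
  commutatorElement_eq_one_iff_mul_comm.2 (Subgroup.mem_center_iff.1 hu a)

theorem commutator_le_ker (h : IsTwoEngel G) (u : commutator G) :
    commutator G ≤ (h.commutatorHomLeft u).ker := fun _ ha =>
  (h.commute_of_mem_commutator ha u.2).commutator_eq

theorem commutatorElement_pow_three_of_mem_commutator (h : IsTwoEngel G) (a : G) {u : G}
    (hu : u ∈ commutator G) : ⁅a, u⁆ ^ 3 = 1 := by
  have hle : commutator G ≤ Subgroup.centralizer {a ^ 3} := by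
    refine Subgroup.commutator_le.2 fun b _ c _ => Subgroup.mem_centralizer_singleton_iff.2 ?_
    refine (commutatorElement_eq_one_iff_mul_comm.1 ?_).symm
    rw [h.commutatorElement_pow_left, h.tripleCommutator_pow_three]
  rw [← h.commutatorElement_pow_left]
  exact commutatorElement_eq_one_iff_mul_comm.2
    (Subgroup.mem_centralizer_singleton_iff.1 (hle hu)).symm

theorem exists_relIndex_center_eq_three_pow [Finite G] (h : IsTwoEngel G) :
    ∃ k, (Subgroup.center G).relIndex (commutator G) = 3 ^ k := by
  refine (IsPGroup.iff_card (p := 3)).1 fun q => ⟨1, ?_⟩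
  induction q using QuotientGroup.induction_on with | H u
  refine (QuotientGroup.eq_one_iff (u ^ 3)).2 (Subgroup.mem_center_iff.2 fun a => ?_)
  refine commutatorElement_eq_one_iff_mul_comm.1 (?_ : h.commutatorHomRight a (u ^ 3) = 1)
  rw [map_pow]
  exact h.commutatorElement_pow_three_of_mem_commutator a u.2

theorem commutator_top_commutator_le_center (h : IsTwoEngel G) :
    ⁅(⊤ : Subgroup G), commutator G⁆ ≤ Subgroup.center G :=
  Subgroup.commutator_le.2 fun a _ _ hu => h.commutatorElement_mem_center a hu

theorem pow_mem_commutator_top_commutator (h : IsTwoEngel G) {n : ℕ}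
    (hn : ∀ g : G, g ^ n ∈ commutator G) {u : G} (hu : u ∈ commutator G) :
    u ^ n ∈ ⁅(⊤ : Subgroup G), commutator G⁆ := by
  rw [commutator_eq_closure] at hu
  induction hu using Subgroup.closure_induction with
  | mem _ hx =>
    obtain ⟨a, b, rfl⟩ := hx
    rw [← h.commutatorElement_pow_left, ← commutatorElement_inv, inv_mem_iff]
    exact Subgroup.commutator_mem_commutator (Subgroup.mem_top b) (hn a)
  | one => simp only [one_pow, one_mem]
  | mul x y hx hy ihx ihy =>
    rw [← commutator_eq_closure] at hx hy
    rw [(h.commute_of_mem_commutator hx hy).mul_pow]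
    exact mul_mem ihx ihy
  | inv x _ ihx => rwa [inv_pow, inv_mem_iff]

theorem tripleCommutator_cyclic (h : IsTwoEngel G) (v : Fin 3 → G) (i j : Fin 3) :
    ⁅v i, ⁅v (j + 1), v (j + 2)⁆⁆ = if i = j then ⁅v 0, ⁅v 1, v 2⁆⁆ else 1 := by
  have h_left (x y : G) : ⁅x, ⁅x, y⁆⁆ = 1 := h x y
  have h_right (x y : G) : ⁅x, ⁅y, x⁆⁆ = 1 := (h.commute_commutatorElement' y x).commutator_eq
  have h_one : ⁅v 1, ⁅v 2, v 0⁆⁆ = ⁅v 0, ⁅v 1, v 2⁆⁆ := (h.tripleCommutator_rotate _ _ _).symm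
  have h_two : ⁅v 2, ⁅v 0, v 1⁆⁆ = ⁅v 0, ⁅v 1, v 2⁆⁆ := h.tripleCommutator_rotate _ _ _
  fin_cases i <;> fin_cases j <;> simp [h_left, h_right, h_one, h_two]

/-- The commutator of the two entries of a triple other than the `j`-th, in cyclic order, as an
element of the derived subgroup; these elements are dual to the entries under the commutator
pairing. -/
def cyclicCommutator (v : Fin 3 → G) (j : Fin 3) : commutator G :=
  ⟨⁅v (j + 1), v (j + 2)⁆,
    Subgroup.commutator_mem_commutator (Subgroup.mem_top _) (Subgroup.mem_top _)⟩

theorem orderOf_tripleCommutator_pow_three_dvd_index_commutator (h : IsTwoEngel G)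
    (v : Fin 3 → G) : orderOf ⁅v 0, ⁅v 1, v 2⁆⁆ ^ 3 ∣ (commutator G).index :=
  orderOf_pow_card_dvd_index (fun i => h.commutatorHomLeft (cyclicCommutator v i)) v
    (fun i j => (h.tripleCommutator_cyclic v j i).trans (if_congr eq_comm rfl rfl))
    fun _ => h.commutator_le_ker _

theorem orderOf_tripleCommutator_pow_three_dvd_relIndex_center (h : IsTwoEngel G)
    (v : Fin 3 → G) {S : Subgroup (commutator G)} (hS : ∀ i, cyclicCommutator v i ∈ S) :
    orderOf ⁅v 0, ⁅v 1, v 2⁆⁆ ^ 3 ∣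
      ((Subgroup.center G).subgroupOf (commutator G)).relIndex S :=
  orderOf_pow_card_dvd_index (fun i => (h.commutatorHomRight (v i)).comp S.subtype)
    (fun i => ⟨cyclicCommutator v i, hS i⟩) (h.tripleCommutator_cyclic v)
    fun i _ hu => h.center_subgroupOf_le_ker (v i) hu

/-- By hypothesis the cyclic commutators of `v` generate the derived subgroup modulo the center. -/
theorem commutator_top_commutator_le_zpowers (h : IsTwoEngel G) (v : Fin 3 → G)
    (hv : (Subgroup.center G).relIndex (commutator G) = orderOf ⁅v 0, ⁅v 1, v 2⁆⁆ ^ 3) :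
    ⁅(⊤ : Subgroup G), commutator G⁆ ≤ Subgroup.zpowers ⁅v 0, ⁅v 1, v 2⁆⁆ := by
  set w := ⁅v 0, ⁅v 1, v 2⁆⁆
  have hw_pos : 0 < orderOf w :=
    (isOfFinOrder_iff_pow_eq_one.2 ⟨3, three_pos, h.tripleCommutator_pow_three _ _ _⟩).orderOf_pos
  let S (a : G) : Subgroup (commutator G) := (Subgroup.zpowers w).comap (h.commutatorHomRight a)
  have S_eq_top {a : G} (ha : ∀ i, cyclicCommutator v i ∈ S a) : S a = ⊤ := by
    have hle : (Subgroup.center G).subgroupOf (commutator G) ≤ S a :=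
      (h.center_subgroupOf_le_ker a).trans ((h.commutatorHomRight a).ker_le_comap _)
    obtain ⟨m, hm⟩ := h.orderOf_tripleCommutator_pow_three_dvd_relIndex_center v ha
    have hindex := Subgroup.relIndex_mul_index hle
    rw [hm, mul_assoc] at hindex
    have hone : m * (S a).index = 1 :=
      (Nat.mul_eq_left (pow_pos hw_pos 3).ne').1 (hindex.trans hv)
    exact Subgroup.index_eq_one.1 (Nat.eq_one_of_mul_eq_one_left hone)
  have mem_of_entry (i : Fin 3) {u : G} (hu : u ∈ commutator G) :
      ⁅v i, u⁆ ∈ Subgroup.zpowers w := by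
    have htop : S (v i) = ⊤ := S_eq_top fun j => by
      change ⁅v i, ⁅v (j + 1), v (j + 2)⁆⁆ ∈ Subgroup.zpowers w
      rw [h.tripleCommutator_cyclic]
      split_ifs
      exacts [Subgroup.mem_zpowers w, one_mem _]
    exact (htop ▸ Subgroup.mem_top _ : (⟨u, hu⟩ : commutator G) ∈ S (v i))
  refine Subgroup.commutator_le.2 fun a _ u hu => ?_
  have htop : S a = ⊤ := S_eq_top fun j => by
    change ⁅a, ⁅v (j + 1), v (j + 2)⁆⁆ ∈ Subgroup.zpowers w
    rw [h.tripleCommutator_rotate]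
    exact mem_of_entry _
      (Subgroup.commutator_mem_commutator (Subgroup.mem_top _) (Subgroup.mem_top _))
  exact (htop ▸ Subgroup.mem_top _ : (⟨u, hu⟩ : commutator G) ∈ S a)

end IsTwoEngel

theorem commutator_le_center_of_tripleCommutator_eq_one
    (h : ∀ x y z : G, ⁅x, ⁅y, z⁆⁆ = 1) : commutator G ≤ Subgroup.center G :=
  Subgroup.commutator_le.2 fun y _ z _ => Subgroup.mem_center_iff.2 fun x =>
    commutatorElement_eq_one_iff_mul_comm.1 (h x y z)

namespace IsEGroup

theorem isTwoEngel (hE : IsEGroup G) : IsTwoEngel G := fun x y => by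
  have hconj : Commute x (y * x * y⁻¹) := hE (MulAut.conj y).toMonoidHom x
  have hmul : ⁅x, y⁆ = x * (y * x * y⁻¹)⁻¹ := by simp [commutatorElement_def, mul_assoc]
  rw [commutatorElement_eq_one_iff_commute, hmul]
  exact (Commute.refl x).mul_right hconj.inv_right

theorem mem_center_of_pow_card_eq_one (hE : IsEGroup G) {C : Type*} [Group C] [IsCyclic C]
    {f : G →* C} (hf : Function.Surjective f) {u : G} (hu : u ^ Nat.card C = 1) :
    u ∈ Subgroup.center G := by
  obtain ⟨c, hc⟩ := IsCyclic.exists_generator (α := C)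
  have hdvd : orderOf u ∣ orderOf c := by
    rw [orderOf_eq_card_of_forall_mem_zpowers hc]
    exact orderOf_dvd_of_pow_eq_one hu
  let ψ : C →* G := monoidHomOfForallMemZpowers hc hdvd
  have commute_of_map_eq {g : G} (hg : f g = c) : Commute g u := by
    have hcomm : Commute g (ψ (f g)) := hE (ψ.comp f) g
    rwa [hg, monoidHomOfForallMemZpowers_apply_gen] at hcomm
  obtain ⟨g, hg⟩ := hf c
  refine Subgroup.mem_center_iff.2 fun a => ?_
  obtain ⟨k, hk⟩ := Subgroup.mem_zpowers_iff.1 (hc (f a))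
  have ha : Commute (a * g ^ (1 - k)) u := commute_of_map_eq (by
    rw [map_mul, map_zpow, hg, ← hk, ← zpow_add, add_sub_cancel, zpow_one])
  have hmul := ha.mul_left ((commute_of_map_eq hg).zpow_left (1 - k)).inv_left
  rwa [mul_inv_cancel_right] at hmul

theorem mem_center_of_pow_exponent_abelianization_eq_one [Finite G] (hE : IsEGroup G) {u : G}
    (hu : u ^ Monoid.exponent (Abelianization G) = 1) : u ∈ Subgroup.center G := by
  obtain ⟨χ, hχ⟩ := exists_card_range_eq_exponent (Abelianization G)
  have : Finite χ.range := Set.finite_range χ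
  refine hE.mem_center_of_pow_card_eq_one (f := χ.rangeRestrict.comp Abelianization.of)
    (χ.rangeRestrict_surjective.comp QuotientGroup.mk_surjective) ?_
  rwa [hχ]

theorem relIndex_center_commutator_dvd_card [Finite G] (hE : IsEGroup G) :
    (Subgroup.center G).relIndex (commutator G) ∣
      Nat.card (⁅(⊤ : Subgroup G), commutator G⁆ : Subgroup G) := by
  have h := hE.isTwoEngel
  let n := Monoid.exponent (Abelianization G)
  have pow_mem (g : G) : g ^ n ∈ commutator G := by
    rw [← Abelianization.ker_of, MonoidHom.mem_ker, map_pow, Monoid.pow_exponent_eq_one]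
  let P : commutator G →* G :=
    { toFun := fun u => (u : G) ^ n
      map_one' := one_pow n
      map_mul' := fun u v => (h.commute_of_mem_commutator u.2 v.2).mul_pow n }
  have hker : P.ker ≤ (Subgroup.center G).subgroupOf (commutator G) := fun _ hu =>
    hE.mem_center_of_pow_exponent_abelianization_eq_one hu
  have hrange : P.range ≤ ⁅(⊤ : Subgroup G), commutator G⁆ := by
    rintro _ ⟨u, rfl⟩
    exact h.pow_mem_commutator_top_commutator pow_mem u.2
  calc (Subgroup.center G).relIndex (commutator G) ∣ P.ker.index := Subgroup.index_dvd_of_le hker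
    _ = Nat.card P.range := Subgroup.index_ker P
    _ ∣ Nat.card (⁅(⊤ : Subgroup G), commutator G⁆ : Subgroup G) := Subgroup.card_dvd_of_le hrange

theorem relIndex_sq_mul_index_dvd_card [Finite G] (hE : IsEGroup G) :
    (Subgroup.center G).relIndex (commutator G) ^ 2 * (commutator G).index ∣ Nat.card G := by
  have hle : ⁅(⊤ : Subgroup G), commutator G⁆ ≤ Subgroup.center G ⊓ commutator G :=
    le_inf hE.isTwoEngel.commutator_top_commutator_le_center (Subgroup.commutator_le_right _ _)
  calc (Subgroup.center G).relIndex (commutator G) ^ 2 * (commutator G).index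
      ∣ Nat.card (Subgroup.center G ⊓ commutator G : Subgroup G) *
          (Subgroup.center G).relIndex (commutator G) * (commutator G).index := by
        rw [pow_two]
        gcongr
        exact hE.relIndex_center_commutator_dvd_card.trans (Subgroup.card_dvd_of_le hle)
    _ = Nat.card G := by
        rw [← Subgroup.inf_relIndex_right, mul_assoc, Subgroup.relIndex_mul_index inf_le_right,
          Subgroup.card_mul_index]

end IsEGroup

theorem threeEGroup_card_le_three_pow_ten_class_le_two_general [Finite G] (hE : IsEGroup G)
    (hcard : ¬ 3 ^ 11 ∣ Nat.card G) : commutator G ≤ Subgroup.center G := by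
  have h := hE.isTwoEngel
  refine commutator_le_center_of_tripleCommutator_eq_one fun x y z => by_contra fun hw => ?_
  let v : Fin 3 → G := ![x, y, z]
  have hw_order : orderOf ⁅v 0, ⁅v 1, v 2⁆⁆ = 3 :=
    orderOf_eq_prime (h.tripleCommutator_pow_three x y z) hw
  obtain ⟨k, hk⟩ := h.exists_relIndex_center_eq_three_pow
  have hD := h.orderOf_tripleCommutator_pow_three_dvd_index_commutator v
  rw [hw_order] at hD
  have hk_ge : 3 ≤ k := by
    have hZ := h.orderOf_tripleCommutator_pow_three_dvd_relIndex_center v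
      fun _ => Subgroup.mem_top _
    rw [hw_order, Subgroup.relIndex_top_right] at hZ
    exact (Nat.pow_dvd_pow_iff_le_right (by norm_num)).1 (hZ.trans hk.dvd)
  have hk_le : k ≤ 3 := by
    by_contra! hlt
    refine hcard (dvd_trans ?_ hE.relIndex_sq_mul_index_dvd_card)
    rw [hk]
    exact (mul_dvd_mul (pow_dvd_pow_of_dvd (pow_dvd_pow 3 hlt) 2) hD : (3 ^ 4) ^ 2 * 3 ^ 3 ∣ _)
  obtain rfl := hk_le.antisymm hk_ge
  have hle := h.commutator_top_commutator_le_zpowers v (by rw [hk, hw_order])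
  have hdvd : 3 ^ 3 ∣ 3 := by
    simpa only [hk, Nat.card_zpowers, hw_order] using
      hE.relIndex_center_commutator_dvd_card.trans (Subgroup.card_dvd_of_le hle)
  norm_num at hdvd

end

/-- Every finite `3`-group which is an `E`-group and has order at most `3 ^ 10`
is nilpotent of class at most 2, i.e. its derived subgroup is contained in its
center. -/
theorem threeEGroup_card_le_three_pow_ten_class_le_two
    {G : Type*} [Group G] [Finite G] (h3 : IsPGroup 3 G) (hE : IsEGroup G)
    (hcard : Nat.card G ≤ 3 ^ 10) :
    commutator G ≤ Subgroup.center G :=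
  threeEGroup_card_le_three_pow_ten_class_le_two_general hE fun hdvd => by
    have := Nat.le_of_dvd Nat.card_pos hdvd
    lia
end

section
/- There exists a non-abelian finite group of order 2^7 = 128 that is an E-group. -/
/-!
Let `V` and `Z` be vector spaces over `𝔽₂` and let `Q : V → Z` be a surjective quadratic map.
Writing `Q v = B v v` with `B` bilinear gives a central extension of `V` by `Z` in which the square
of a lift of `v` is `Q v`, and two elements commute iff the polar form of `Q` vanishes at their
images in `V`. An endomorphism of the extension induces linear maps `α` on `V` and `β` on `Z` with
`Q ∘ α = β ∘ Q`, so the extension is an `E`-group as soon as `0` and `id` are the only such `α`.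

We use an anisotropic `Q : 𝔽₂⁴ → 𝔽₂³`. If `β` kills some `c ≠ 0`, then `α` kills every `v` with
`Q v = c`, so `β` kills the values of the polar form at these `v`; for our `Q` these and `c`
generate `Z`, whence `β = 0` and `α = 0`. Otherwise `α` and `β` are bijective, so `α` fixes the only
nonzero vector that `Q` separates from all the others, and relations between the values of `Q` and
of its polar form then determine the images of the remaining basis vectors.
-/

open QuadraticMap LinearMap.BilinMap

section Intertwines

variable {R V Z : Type*} [CommRing R] [AddCommGroup V] [AddCommGroup Z] [Module R V] [Module R Z]

/-- The linear maps `α` and `β` satisfy `Q ∘ α = β ∘ Q`; this is what an endomorphism of the central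
extension attached to `Q` induces on its base and its fibre. -/
def Intertwines (Q : QuadraticMap R V Z) (α : V →ₗ[R] V) (β : Z →ₗ[R] Z) : Prop :=
  ∀ v, Q (α v) = β (Q v)

namespace Intertwines

variable {Q : QuadraticMap R V Z} {α : V →ₗ[R] V} {β : Z →ₗ[R] Z}

theorem polar_map (h : Intertwines Q α β) (u v : V) :
    polar Q (α u) (α v) = β (polar Q u v) := by
  simp only [polar, ← map_add, ← map_sub, h _]

theorem eq_zero (h : Intertwines Q α β) (hQ : Q.Anisotropic) (hβ : β = 0) : α = 0 :=
  LinearMap.ext fun v ↦ hQ _ (by rw [h v, hβ, LinearMap.zero_apply])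

theorem injective (h : Intertwines Q α β) (hQ : Q.Anisotropic) (hβ : Function.Injective β) :
    Function.Injective α := by
  refine (injective_iff_map_eq_zero α).mpr fun v hv ↦ hQ v (hβ ?_)
  rw [← h v, hv, map_zero, map_zero]

theorem eq_zero_or_injective (h : Intertwines Q α β) (hQ : Q.Anisotropic)
    (hgen : ∀ c ≠ 0, ∀ z, ∃ v, Q v = c ∧ ∃ (u : V) (k : R), z = polar Q v u + k • c) :
    β = 0 ∨ Function.Injective β := by
  refine or_iff_not_imp_right.mpr fun hβ ↦ LinearMap.ext fun z ↦ ?_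
  obtain ⟨c, hβc, hc⟩ : ∃ c, β c = 0 ∧ c ≠ 0 := by
    simpa [injective_iff_map_eq_zero] using hβ
  obtain ⟨v, rfl, u, k, rfl⟩ := hgen c hc z
  have hαv : α v = 0 := hQ _ (by rw [h v, hβc])
  rw [map_add, map_smul, hβc, ← h.polar_map, hαv, polar_zero_left, smul_zero, add_zero,
    LinearMap.zero_apply]

theorem eq_of_map_eq_map (h : Intertwines Q α β) (hα : Function.Surjective α)
    (hβ : Function.Injective β) {v : V} (hv : ∀ u, Q u = Q v → u = v) {w : V}
    (hw : Q w = Q (α v)) : w = α v := by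
  obtain ⟨u, rfl⟩ := hα w
  rw [hv u (hβ (by rw [← h u, hw, h v]))]

end Intertwines

end Intertwines

/-- The central extension of `V` by `Z` with cocycle a bilinear map `B`: the set `V × Z` with
product `(u, y) * (v, z) = (u + v, y + z + B u v)`. -/
@[ext]
structure BilinearExtension {R V Z : Type*} [CommRing R] [AddCommGroup V] [AddCommGroup Z]
    [Module R V] [Module R Z] (B : LinearMap.BilinMap R V Z) where
  base : V
  fiber : Z

namespace BilinearExtension

section Group

variable {R V Z : Type*} [CommRing R] [AddCommGroup V] [AddCommGroup Z] [Module R V] [Module R Z]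
  {B : LinearMap.BilinMap R V Z}

instance : Mul (BilinearExtension B) :=
  ⟨fun x y ↦ ⟨x.base + y.base, x.fiber + y.fiber + B x.base y.base⟩⟩

instance : One (BilinearExtension B) := ⟨⟨0, 0⟩⟩

instance : Inv (BilinearExtension B) := ⟨fun x ↦ ⟨-x.base, -x.fiber + B x.base x.base⟩⟩

@[simp] theorem base_mul (x y : BilinearExtension B) : (x * y).base = x.base + y.base := rfl

@[simp] theorem fiber_mul (x y : BilinearExtension B) :
    (x * y).fiber = x.fiber + y.fiber + B x.base y.base := rfl

@[simp] theorem base_one : (1 : BilinearExtension B).base = 0 := rfl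

@[simp] theorem fiber_one : (1 : BilinearExtension B).fiber = 0 := rfl

@[simp] theorem base_inv (x : BilinearExtension B) : x⁻¹.base = -x.base := rfl

@[simp] theorem fiber_inv (x : BilinearExtension B) :
    x⁻¹.fiber = -x.fiber + B x.base x.base := rfl

instance : Group (BilinearExtension B) :=
  Group.ofLeftAxioms
    (fun x y z ↦ by
      ext1
      · exact add_assoc _ _ _
      · simp only [base_mul, fiber_mul, map_add, LinearMap.add_apply]
        abel)
    (fun x ↦ by ext1 <;> simp)
    (fun x ↦ by ext1 <;> simp)

variable (B) in
/-- The bijection of the extension with the product of its base and its fibre. -/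
def equivProd : BilinearExtension B ≃ V × Z where
  toFun x := (x.base, x.fiber)
  invFun p := ⟨p.1, p.2⟩

instance [Finite V] [Finite Z] : Finite (BilinearExtension B) :=
  Finite.of_equiv _ (equivProd B).symm

theorem natCard_eq_mul : Nat.card (BilinearExtension B) = Nat.card V * Nat.card Z := by
  rw [Nat.card_congr (equivProd B), Nat.card_prod]

theorem mul_comm_iff {x y : BilinearExtension B} :
    x * y = y * x ↔ B x.base y.base = B y.base x.base := by
  simp [BilinearExtension.ext_iff, add_comm]

end Group

section CharTwo

variable {V Z : Type*} [AddCommGroup V] [AddCommGroup Z] [Module (ZMod 2) V] [Module (ZMod 2) Z]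
  {B : LinearMap.BilinMap (ZMod 2) V Z}

theorem mul_comm_iff_polar_eq_zero {x y : BilinearExtension B} :
    x * y = y * x ↔ polar B.toQuadraticMap x.base y.base = 0 := by
  rw [mul_comm_iff, polar_toQuadraticMap, ← ZModModule.sub_eq_add, sub_eq_zero]

theorem mul_self_eq (x : BilinearExtension B) : x * x = ⟨0, B.toQuadraticMap x.base⟩ := by
  ext1 <;> simp [ZModModule.add_self]

theorem base_map_of_base_eq_zero (hB : Function.Surjective B.toQuadraticMap)
    (φ : BilinearExtension B →* BilinearExtension B) {x : BilinearExtension B} (hx : x.base = 0) :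
    (φ x).base = 0 := by
  obtain ⟨v, hv⟩ := hB x.fiber
  have hsq : x = ⟨v, 0⟩ * ⟨v, 0⟩ := by rw [mul_self_eq]; exact BilinearExtension.ext hx hv.symm
  rw [hsq, map_mul, mul_self_eq]

theorem exists_linearMap_of_endomorphism (hB : Function.Surjective B.toQuadraticMap)
    (φ : BilinearExtension B →* BilinearExtension B) :
    ∃ (α : V →ₗ[ZMod 2] V) (β : Z →ₗ[ZMod 2] Z),
      Intertwines B.toQuadraticMap α β ∧ ∀ x, (φ x).base = α x.base := by
  have base_map (x : BilinearExtension B) : (φ x).base = (φ ⟨x.base, 0⟩).base := by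
    have hx : x = ⟨x.base, 0⟩ * ⟨0, x.fiber⟩ := by ext1 <;> simp
    nth_rw 1 [hx]
    rw [map_mul, base_mul, base_map_of_base_eq_zero hB φ (x := ⟨0, x.fiber⟩) rfl, add_zero]
  let α : V →+ V := AddMonoidHom.mk' (fun v ↦ (φ ⟨v, 0⟩).base) fun u v ↦ by
    rw [← base_mul, ← map_mul, base_map (_ * _), base_mul]
  let β : Z →+ Z := AddMonoidHom.mk' (fun z ↦ (φ ⟨0, z⟩).fiber) fun y z ↦ by
    have hyz : (⟨0, y + z⟩ : BilinearExtension B) = ⟨0, y⟩ * ⟨0, z⟩ := by ext1 <;> simp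
    rw [hyz, map_mul, fiber_mul, base_map_of_base_eq_zero hB φ (x := ⟨0, y⟩) rfl, map_zero,
      LinearMap.zero_apply, add_zero]
  refine ⟨α.toZModLinearMap 2, β.toZModLinearMap 2, fun v ↦ ?_, base_map⟩
  have hsq := congrArg fiber (map_mul φ ⟨v, 0⟩ ⟨v, 0⟩)
  rw [mul_self_eq, mul_self_eq] at hsq
  exact hsq.symm

theorem isEGroup_of_polar_eq_zero (hB : Function.Surjective B.toQuadraticMap)
    (hpolar : ∀ (α : V →ₗ[ZMod 2] V) (β : Z →ₗ[ZMod 2] Z),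
      Intertwines B.toQuadraticMap α β → ∀ v, polar B.toQuadraticMap v (α v) = 0) :
    IsEGroup (BilinearExtension B) := by
  intro φ x
  obtain ⟨α, β, h, hα⟩ := exists_linearMap_of_endomorphism hB φ
  rw [mul_comm_iff_polar_eq_zero, hα]
  exact hpolar α β h x.base

end CharTwo

end BilinearExtension

namespace RigidForm

/-- A bilinear map `𝔽₂⁴ × 𝔽₂⁴ → 𝔽₂³`, upper triangular so that its coefficients are those of the
quadratic map `form`. -/
def cocycle : LinearMap.BilinMap (ZMod 2) (Fin 4 → ZMod 2) (Fin 3 → ZMod 2) :=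
  LinearMap.mk₂ (ZMod 2)
    (fun u v ↦ ![u 0 * v 0 + u 0 * v 1 + u 1 * v 3,
      u 1 * v 1 + u 3 * v 3 + u 0 * v 2 + u 1 * v 3,
      u 2 * v 2 + u 3 * v 3 + u 0 * v 3])
    (fun u u' v ↦ by ext i; fin_cases i <;> simp <;> ring)
    (fun c u v ↦ by ext i; fin_cases i <;> simp <;> ring)
    (fun u v v' ↦ by ext i; fin_cases i <;> simp <;> ring)
    (fun c u v ↦ by ext i; fin_cases i <;> simp <;> ring)

/-- The quadratic map whose extension is the `E`-group. In the basis `e`, it satisfies the relations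
of `polar_relations`, found by a computer search for maps such that any `α` in an intertwining pair
is `0` or `id`. -/
abbrev form : QuadraticMap (ZMod 2) (Fin 4 → ZMod 2) (Fin 3 → ZMod 2) := cocycle.toQuadraticMap

/-- The standard basis vectors of `𝔽₂⁴`. -/
abbrev e (i : Fin 4) : Fin 4 → ZMod 2 := Pi.single i 1

theorem form_anisotropic : form.Anisotropic := by
  unfold Anisotropic
  decide +kernel

theorem exists_eq_polar_add_smul : ∀ c ≠ 0, ∀ z, ∃ v, form v = c ∧
    ∃ (u : Fin 4 → ZMod 2) (k : ZMod 2), z = polar form v u + k • c := by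
  decide +kernel

theorem form_surjective : Function.Surjective form := by
  decide +kernel

theorem ne_zero_and_separated_iff_eq_e_zero (v : Fin 4 → ZMod 2) :
    (v ≠ 0 ∧ ∀ u, form u = form v → u = v) ↔ v = e 0 := by
  revert v
  decide +kernel

theorem polar_relations :
    polar form (e 0) (e 1) = form (e 0) ∧ polar form (e 0) (e 2) = form (e 1) ∧
      polar form (e 1) (e 2) = 0 ∧ polar form (e 0) (e 3) = form (e 2) ∧
      form (e 3) = form (e 1) + form (e 2) := by
  decide +kernel

theorem eq_e_of_polar_relations : ∀ x, polar form (e 0) x = form (e 0) →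
    ∀ y, polar form (e 0) y = form x → polar form x y = 0 →
    ∀ z, polar form (e 0) z = form y → form z = form x + form y →
      x = e 1 ∧ y = e 2 ∧ z = e 3 := by
  decide +kernel

variable {α : (Fin 4 → ZMod 2) →ₗ[ZMod 2] (Fin 4 → ZMod 2)}
  {β : (Fin 3 → ZMod 2) →ₗ[ZMod 2] (Fin 3 → ZMod 2)}

theorem map_e_zero (h : Intertwines form α β) (hβ : Function.Injective β) : α (e 0) = e 0 := by
  have hα : Function.Injective α := h.injective form_anisotropic hβ
  obtain ⟨h_ne, h_sep⟩ := (ne_zero_and_separated_iff_eq_e_zero (e 0)).mpr rfl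
  exact (ne_zero_and_separated_iff_eq_e_zero _).mp
    ⟨(map_ne_zero_iff α hα).mpr h_ne, fun _ ↦
      h.eq_of_map_eq_map (Finite.surjective_of_injective hα) hβ h_sep⟩

theorem eq_id_of_injective (h : Intertwines form α β) (hβ : Function.Injective β) :
    α = LinearMap.id := by
  have h₀ : α (e 0) = e 0 := map_e_zero h hβ
  have h_polar (v : Fin 4 → ZMod 2) : polar form (e 0) (α v) = β (polar form (e 0) v) := by
    rw [← h.polar_map, h₀]
  obtain ⟨h₀₁, h₀₂, h₁₂, h₀₃, h_form⟩ := polar_relations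
  obtain ⟨h₁, h₂, h₃⟩ := eq_e_of_polar_relations
    (α (e 1)) (by rw [h_polar, h₀₁, ← h (e 0), h₀])
    (α (e 2)) (by rw [h_polar, h₀₂, h (e 1)]) (by rw [h.polar_map, h₁₂, map_zero])
    (α (e 3)) (by rw [h_polar, h₀₃, h (e 2)]) (by rw [h (e 1), h (e 2), h (e 3), h_form, map_add])
  refine (Pi.basisFun (ZMod 2) (Fin 4)).ext fun i ↦ ?_
  fin_cases i <;> simpa

theorem eq_zero_or_eq_id (h : Intertwines form α β) : α = 0 ∨ α = LinearMap.id :=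
  (h.eq_zero_or_injective form_anisotropic exists_eq_polar_add_smul).imp
    (h.eq_zero form_anisotropic) (eq_id_of_injective h)

theorem polar_map_self_eq_zero (h : Intertwines form α β) (v : Fin 4 → ZMod 2) :
    polar form v (α v) = 0 := by
  obtain rfl | rfl := eq_zero_or_eq_id h
  · exact polar_zero_right _ v
  · rw [LinearMap.id_apply, polar_self, two_smul, ZModModule.add_self]

end RigidForm

/-- There exists a non-abelian finite group of order `2 ^ 7 = 128` that is an
`E`-group. -/
theorem exists_nonabelian_EGroup_card_128 :
    ∃ (G : Type) (_ : Group G), Finite G ∧ Nat.card G = 2 ^ 7 ∧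
      IsEGroup G ∧ ∃ x y : G, x * y ≠ y * x := by
  refine ⟨BilinearExtension RigidForm.cocycle, inferInstance, inferInstance, ?card, ?isEGroup,
    ⟨RigidForm.e 0, 0⟩, ⟨RigidForm.e 1, 0⟩, ?nonabelian⟩
  case card => simp [BilinearExtension.natCard_eq_mul]
  case isEGroup =>
    exact BilinearExtension.isEGroup_of_polar_eq_zero RigidForm.form_surjective
      fun _ _ ↦ RigidForm.polar_map_self_eq_zero
  case nonabelian =>
    rw [Ne, BilinearExtension.mul_comm_iff_polar_eq_zero, RigidForm.polar_relations.1]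
    exact fun h ↦ by simpa using congrFun (RigidForm.form_anisotropic _ h) 0
end
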